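/- Let p be a prime, K a field of characteristic p, n ≥ 1 an integer, and W a finite-dimensional K-vector space. Suppose that for each integer ℓ with 0 ≤ ℓ ≤ n(p−1) we are given a K-subspace F_ℓ ⊆ W ⊗_K R^ℓ such that for all 1 ≤ ℓ ≤ n(p−1) and all 1 ≤ i ≤ n the map id_W ⊗ ∂/∂x_i sends F_ℓ into F_{ℓ−1}. Then for every 0 ≤ ℓ ≤ n(p−1) one has dim_K F_ℓ ≥ (dim_K F_{n(p−1)}) · (dim_K R^ℓ). -/

import Mathlib

open MvPolynomial TensorProduct

/-- `R^ℓ`: the `K`-span of monomials `x₁^{k₁} ⋯ xₙ^{kₙ}` with `∑ kᵢ = ℓ` and `0 ≤ kᵢ ≤ p-1`. -/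
noncomputable def Rsub (K : Type*) [Field K] (p n ℓ : ℕ) :
    Submodule K (MvPolynomial (Fin n) K) :=
  Submodule.span K { q | ∃ k : Fin n →₀ ℕ, (∀ i, k i ≤ p - 1) ∧ (∑ i, k i) = ℓ ∧
    q = monomial k 1 }

/-- `W ⊗_K R^ℓ` viewed as a subspace of `W ⊗_K K[x₁,…,xₙ]`. -/
noncomputable def WR (K W : Type*) [Field K] [AddCommGroup W] [Module K W] (p n ℓ : ℕ) :
    Submodule K (W ⊗[K] MvPolynomial (Fin n) K) :=
  LinearMap.range (LinearMap.lTensor W (Rsub K p n ℓ).subtype)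

/-!
The top piece `R^{n(p-1)}` is the line spanned by `x^t` with `t = (p-1, …, p-1)`, so
`F_{n(p-1)} = V ⊗ x^t` for some `V ⊆ W`. Every monomial `x^k` of `R^ℓ` is reached from `x^t` by
partial derivatives, up to factors between `1` and `p - 1`, which are invertible in `K`. Hence
`V ⊗ R^ℓ ⊆ F_ℓ`, and this subspace has dimension `dim V * dim R^ℓ`.
-/

universe u v w

section MonomialCoeffs

variable {R M σ : Type*} [CommRing R] [AddCommGroup M] [Module R M]

/-- The coefficients `m : M` for which `m ⊗ x^k` lies in a given submodule `N` of polynomials with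
coefficients in `M`. -/
noncomputable def monomialCoeffs (k : σ →₀ ℕ) (N : Submodule R (M ⊗[R] MvPolynomial σ R)) :
    Submodule R M :=
  N.comap ((TensorProduct.mk R M (MvPolynomial σ R)).flip (monomial k 1))

theorem mem_monomialCoeffs {k : σ →₀ ℕ} {N : Submodule R (M ⊗[R] MvPolynomial σ R)} {m : M} :
    m ∈ monomialCoeffs k N ↔ m ⊗ₜ[R] monomial k (1 : R) ∈ N :=
  Iff.rfl

theorem map₂_mk_span_monomial_le_iff {V : Submodule R M} {s : Set (σ →₀ ℕ)}
    {N : Submodule R (M ⊗[R] MvPolynomial σ R)} :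
    Submodule.map₂ (TensorProduct.mk R M (MvPolynomial σ R)) V
        (Submodule.span R ((fun k => monomial k (1 : R)) '' s)) ≤ N ↔
      ∀ k ∈ s, V ≤ monomialCoeffs k N := by
  rw [← Submodule.span_eq V, Submodule.map₂_span_span, Submodule.span_le, Set.image2_subset_iff]
  simp only [Set.forall_mem_image, Submodule.span_eq]
  exact ⟨fun h k hk m hm => h m hm hk, fun h m hm k hk => h k hk hm⟩

theorem map_mk_flip_monomialCoeffs {t : σ →₀ ℕ} {N : Submodule R (M ⊗[R] MvPolynomial σ R)}
    (hN : N ≤ Submodule.map₂ (TensorProduct.mk R M (MvPolynomial σ R)) ⊤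
      (Submodule.span R {monomial t 1})) :
    (monomialCoeffs t N).map ((TensorProduct.mk R M (MvPolynomial σ R)).flip (monomial t 1)) =
      N := by
  rw [Submodule.map₂_span_singleton_eq_map_flip, Submodule.map_top] at hN
  exact Submodule.map_comap_eq_self hN

theorem pderiv_monomial_add_single (k : σ →₀ ℕ) (i : σ) :
    pderiv i (monomial (k + Finsupp.single i 1) (1 : R)) =
      ((k i + 1 : ℕ) : R) • monomial k (1 : R) := by
  simp [smul_monomial]

theorem monomialCoeffs_add_single_le {k : σ →₀ ℕ} {i : σ}
    {N N' : Submodule R (M ⊗[R] MvPolynomial σ R)}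
    (hN : N.map (LinearMap.lTensor M (pderiv i).toLinearMap) ≤ N')
    (hk : IsUnit ((k i + 1 : ℕ) : R)) :
    monomialCoeffs (k + Finsupp.single i 1) N ≤ monomialCoeffs k N' := by
  intro m hm
  have hderiv : m ⊗ₜ[R] pderiv i (monomial (k + Finsupp.single i 1) (1 : R)) ∈ N' :=
    hN ⟨_, mem_monomialCoeffs.1 hm, rfl⟩
  rw [pderiv_monomial_add_single, TensorProduct.tmul_smul] at hderiv
  exact (Submodule.smul_mem_iff_of_isUnit N' hk).1 hderiv

theorem monomialCoeffs_degree_le_of_le {F : ℕ → Submodule R (M ⊗[R] MvPolynomial σ R)}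
    {k t : σ →₀ ℕ}
    (hF : ∀ ℓ < t.degree, ∀ i : σ,
      (F (ℓ + 1)).map (LinearMap.lTensor M (pderiv i).toLinearMap) ≤ F ℓ)
    (ht : ∀ i, IsUnit ((t i).factorial : R)) (hkt : k ≤ t) :
    monomialCoeffs t (F t.degree) ≤ monomialCoeffs k (F k.degree) := by
  have lower_single (k : σ →₀ ℕ) (i : σ) (hk : k + Finsupp.single i 1 ≤ t) :
      monomialCoeffs (k + Finsupp.single i 1) (F (k + Finsupp.single i 1).degree) ≤
        monomialCoeffs k (F k.degree) := by
    have hdegree : (k + Finsupp.single i 1).degree = k.degree + 1 := by simp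
    have hlt : k.degree < t.degree :=
      Nat.lt_of_succ_le (hdegree.symm.trans_le (Finsupp.degree_mono hk))
    have hki : k i + 1 ≤ t i := by simpa using hk i
    have hunit : IsUnit ((k i + 1 : ℕ) : R) :=
      isUnit_of_dvd_unit (Nat.cast_dvd_cast (Nat.dvd_factorial (Nat.succ_pos _) hki)) (ht i)
    rw [hdegree]
    exact monomialCoeffs_add_single_le (hF _ hlt i) hunit
  have lower_add (d : σ →₀ ℕ) : ∀ k, k + d ≤ t →
      monomialCoeffs (k + d) (F (k + d).degree) ≤ monomialCoeffs k (F k.degree) := by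
    induction d using Finsupp.induction_linear with
    | zero => simp
    | add a b iha ihb =>
      intro k hk
      rw [← add_assoc] at hk ⊢
      exact (ihb _ hk).trans (iha _ (le_self_add.trans hk))
    | single i c =>
      induction c with
      | zero => simp
      | succ c ih =>
        intro k hk
        rw [Finsupp.single_add, ← add_assoc] at hk ⊢
        exact (lower_single _ i hk).trans (ih k (le_self_add.trans hk))
  obtain ⟨d, rfl⟩ := exists_add_of_le hkt
  exact lower_add d k le_rfl

end MonomialCoeffs

section Rank

theorem rank_map₂_mk {K : Type u} [Field K] {W : Type v} [AddCommGroup W] [Module K W]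
    {E : Type w} [AddCommGroup E] [Module K E]
    (V : Submodule K W) (S : Submodule K E) :
    Module.rank K (Submodule.map₂ (TensorProduct.mk K W E) V S) =
      Cardinal.lift.{w} (Module.rank K V) * Cardinal.lift.{v} (Module.rank K S) := by
  rw [← TensorProduct.range_mapIncl, ← rank_tensorProduct]
  exact rank_range_of_injective _ (Module.Flat.tensorProduct_mapIncl_injective_of_right V S)

theorem rank_le_lift_rank_monomialCoeffs {R : Type u} [CommRing R] {M : Type v} [AddCommGroup M]
    [Module R M] {σ : Type w} {t : σ →₀ ℕ} {N : Submodule R (M ⊗[R] MvPolynomial σ R)}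
    (hN : N ≤ Submodule.map₂ (TensorProduct.mk R M (MvPolynomial σ R)) ⊤
      (Submodule.span R {monomial t 1})) :
    Module.rank R N ≤ Cardinal.lift.{max u w} (Module.rank R (monomialCoeffs t N)) := by
  have h := lift_rank_map_le ((TensorProduct.mk R M (MvPolynomial σ R)).flip (monomial t 1))
    (monomialCoeffs t N)
  rw [map_mk_flip_monomialCoeffs hN] at h
  rwa [Cardinal.lift_id'.{v, max u v w}, Cardinal.lift_umax.{v, max u w}] at h

end Rank

section TruncatedPolynomials

theorem eq_of_le_of_degree_eq {σ : Type*} {k t : σ →₀ ℕ} (hle : k ≤ t)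
    (hdegree : k.degree = t.degree) : k = t := by
  obtain ⟨d, rfl⟩ := exists_add_of_le hle
  simpa [Finsupp.degree_eq_zero_iff] using hdegree

/-- The exponent `(p - 1, …, p - 1)` of the top-degree monomial with all exponents below `p`. -/
noncomputable def topExponent (p n : ℕ) : Fin n →₀ ℕ :=
  Finsupp.equivFunOnFinite.symm fun _ => p - 1

theorem topExponent_apply (p n : ℕ) (i : Fin n) : topExponent p n i = p - 1 :=
  rfl

theorem degree_topExponent (p n : ℕ) : (topExponent p n).degree = n * (p - 1) := by
  simp [Finsupp.degree_eq_sum, topExponent_apply]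

variable (K : Type*) [Field K] (p n : ℕ)

theorem Rsub_eq_span_image (ℓ : ℕ) :
    Rsub K p n ℓ = Submodule.span K ((fun k => monomial k (1 : K)) ''
      {k : Fin n →₀ ℕ | k ≤ topExponent p n ∧ k.degree = ℓ}) := by
  unfold Rsub
  congr 1
  ext q
  simp only [Set.mem_ofPred_eq, Set.mem_image, Finsupp.le_def, topExponent_apply,
    Finsupp.degree_eq_sum, and_assoc, eq_comm (a := q)]

theorem Rsub_mul_sub_one :
    Rsub K p n (n * (p - 1)) = Submodule.span K {monomial (topExponent p n) 1} := by
  have hexponents : {k | k ≤ topExponent p n ∧ k.degree = n * (p - 1)} = {topExponent p n} := by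
    ext k
    rw [← degree_topExponent p n]
    exact ⟨fun ⟨hle, hdegree⟩ => eq_of_le_of_degree_eq hle hdegree, by rintro rfl; simp⟩
  rw [Rsub_eq_span_image, hexponents, Set.image_singleton]

instance finiteDimensional_Rsub (ℓ : ℕ) : FiniteDimensional K (Rsub K p n ℓ) := by
  rw [Rsub_eq_span_image]
  exact FiniteDimensional.span_of_finite K
    (((Set.finite_Iic (topExponent p n)).subset fun _ hk => hk.1).image _)

variable (W : Type*) [AddCommGroup W] [Module K W]

theorem WR_eq_map₂ (ℓ : ℕ) :
    WR K W p n ℓ = Submodule.map₂ (TensorProduct.mk K W _) ⊤ (Rsub K p n ℓ) := by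
  rw [WR, LinearMap.lTensor, TensorProduct.range_map, LinearMap.range_id, Submodule.range_subtype]

instance finiteDimensional_WR [FiniteDimensional K W] (ℓ : ℕ) :
    FiniteDimensional K (WR K W p n ℓ) := by
  unfold WR
  infer_instance

end TruncatedPolynomials

theorem natCast_factorial_sub_one_ne_zero {p : ℕ} (hp : p.Prime) (K : Type*) [Field K]
    [CharP K p] : ((p - 1).factorial : K) ≠ 0 :=
  have := Fact.mk hp
  ((IsUnit.natCast_factorial_iff_of_charP p).2 (Nat.sub_one_lt hp.ne_zero)).ne_zero

theorem stmt1_general (p n : ℕ) (K : Type u) [Field K] (hfact : ((p - 1).factorial : K) ≠ 0)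
    (W : Type v) [AddCommGroup W] [Module K W]
    (F : ℕ → Submodule K (W ⊗[K] MvPolynomial (Fin n) K))
    (hF : F (n * (p - 1)) ≤ WR K W p n (n * (p - 1)))
    (hD : ∀ ℓ < n * (p - 1), ∀ i : Fin n,
      Submodule.map (LinearMap.lTensor W (pderiv i).toLinearMap) (F (ℓ + 1)) ≤ F ℓ) (ℓ : ℕ) :
    Module.rank K (F (n * (p - 1))) * Cardinal.lift.{v} (Module.rank K (Rsub K p n ℓ)) ≤
      Module.rank K (F ℓ) := by
  rw [WR_eq_map₂, Rsub_mul_sub_one] at hF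
  rw [← degree_topExponent] at hF hD ⊢
  set t := topExponent p n
  let V := monomialCoeffs t (F t.degree)
  have hVR : Submodule.map₂ (TensorProduct.mk K W _) V (Rsub K p n ℓ) ≤ F ℓ := by
    rw [Rsub_eq_span_image, map₂_mk_span_monomial_le_iff]
    rintro k ⟨hkt, rfl⟩
    exact monomialCoeffs_degree_le_of_le hD (fun _ => hfact.isUnit) hkt
  calc Module.rank K (F t.degree) * Cardinal.lift.{v} (Module.rank K (Rsub K p n ℓ))
      ≤ Cardinal.lift.{u} (Module.rank K V) * Cardinal.lift.{v} (Module.rank K (Rsub K p n ℓ)) :=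
        mul_le_mul_left (rank_le_lift_rank_monomialCoeffs hF) _
    _ = Module.rank K (Submodule.map₂ (TensorProduct.mk K W _) V (Rsub K p n ℓ)) :=
        (rank_map₂_mk V _).symm
    _ ≤ Module.rank K (F ℓ) := Submodule.rank_mono hVR

theorem stmt1 (p : ℕ) (hp : p.Prime) (n : ℕ) (hn : 1 ≤ n)
    (K : Type*) [Field K] [CharP K p]
    (W : Type*) [AddCommGroup W] [Module K W] [FiniteDimensional K W]
    (F : ℕ → Submodule K (W ⊗[K] MvPolynomial (Fin n) K))
    (hF : ∀ ℓ ≤ n * (p - 1), F ℓ ≤ WR K W p n ℓ)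
    (hD : ∀ ℓ, 1 ≤ ℓ → ℓ ≤ n * (p - 1) → ∀ i : Fin n,
      Submodule.map (LinearMap.lTensor W (pderiv i).toLinearMap) (F ℓ) ≤ F (ℓ - 1)) :
    ∀ ℓ ≤ n * (p - 1),
      Module.finrank K (F (n * (p - 1))) * Module.finrank K (Rsub K p n ℓ)
        ≤ Module.finrank K (F ℓ) := by
  intro ℓ hℓ
  have := Submodule.finiteDimensional_of_le (hF ℓ hℓ)
  simpa [Module.finrank] using Cardinal.toNat_le_toNat
    (stmt1_general p n K (natCast_factorial_sub_one_ne_zero hp K) W F (hF _ le_rfl)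
      (fun m hm => hD (m + 1) m.succ_pos hm) ℓ) (Module.rank_lt_aleph0 K (F ℓ))
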